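/- Let (R,B) be an EIC problem with problem graph G, let {Ñ_1,…,Ñ_n} be a neighborhood partition, and for each w ∈ [n] let (R^(w),B^(w)) be the EIC subproblem induced by Ñ_w. Suppose that for each w ∈ [n], β^(w) ∈ F_2^{h_w×m} is a centralized linear broadcast solution to (R^(w),B^(w)) whose nonzero columns are indexed only by blocks requested by requirement pairs in Ñ_w. Then β^(1),…,β^(n) is a task-based solution to (R,B) of length Σ_{w=1}^n h_w. -/

import Mathlib

open Matrix BigOperators

namespace EIC

variable {n m : ℕ}

/-- The vertex set of the problem graph of the EIC problem `(R, B)`: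
one vertex for each requirement pair `(u, a)` with `R u a = 1`. -/
abbrev Vtx (R : Matrix (Fin n) (Fin m) (ZMod 2)) : Type :=
  {p : Fin n × Fin m // R p.1 p.2 = 1}

/-- `(R, B)` have disjoint supports: no position has both `B = 1` and `R = 1`. -/
def DisjointSupports (R B : Matrix (Fin n) (Fin m) (ZMod 2)) : Prop :=
  ∀ u a, ¬(B u a = 1 ∧ R u a = 1)

/-- The standard basis vector `e_a ∈ F_2^m`. -/
def e (m : ℕ) (a : Fin m) : Fin m → ZMod 2 := Pi.single a 1

/-- `β` (with rows indexed by `ι`) is a centralized linear broadcast solution to `(R, B)`: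
for every requirement pair `(u, a)` there is `α` with `e_a = α · [β ; diag(B_u)]`. -/
def IsCentralizedSolution (R B : Matrix (Fin n) (Fin m) (ZMod 2))
    {ι : Type} [Fintype ι] (β : Matrix ι (Fin m) (ZMod 2)) : Prop :=
  ∀ u a, R u a = 1 →
    ∃ α : ι ⊕ Fin m → ZMod 2,
      e m a = α ᵥ* Matrix.fromRows β (Matrix.diagonal (B u))

/-- `(C)_{(R,B)}`: the minimum length of a centralized linear broadcast solution. -/
noncomputable def Copt (R B : Matrix (Fin n) (Fin m) (ZMod 2)) : ℕ :=
  sInf {h | ∃ β : Matrix (Fin h) (Fin m) (ZMod 2), IsCentralizedSolution R B β}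

/-- The vertical concatenation of the matrices `β u`, `u ∈ [n]`. -/
def vconcat {h : Fin n → ℕ} (β : ∀ u : Fin n, Matrix (Fin (h u)) (Fin m) (ZMod 2)) :
    Matrix ((ℓ : Fin n) × Fin (h ℓ)) (Fin m) (ZMod 2) :=
  Matrix.of fun p => β p.1 p.2

/-- `β⁽¹⁾, …, β⁽ⁿ⁾` is a (decentralized) linear broadcast solution to `(R, B)`. -/
def IsBroadcastSolution (R B : Matrix (Fin n) (Fin m) (ZMod 2))
    {h : Fin n → ℕ} (β : ∀ u : Fin n, Matrix (Fin (h u)) (Fin m) (ZMod 2)) : Prop :=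
  (∀ u a, B u a = 0 → ∀ i, β u i a = 0) ∧
  ∀ u a, R u a = 1 →
    ∃ α : ((ℓ : Fin n) × Fin (h ℓ)) ⊕ Fin m → ZMod 2,
      e m a = α ᵥ* Matrix.fromRows (vconcat β) (Matrix.diagonal (B u))

/-- `(D)_{(R,B)}`: the minimum length of a decentralized linear broadcast solution. -/
noncomputable def Dopt (R B : Matrix (Fin n) (Fin m) (ZMod 2)) : ℕ :=
  sInf {s | ∃ (h : Fin n → ℕ) (β : ∀ u : Fin n, Matrix (Fin (h u)) (Fin m) (ZMod 2)),
    IsBroadcastSolution R B β ∧ ∑ u, h u = s}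

/-- A task-based solution: a linear broadcast solution where every requirement pair
`(u, a)` can be decoded from the broadcast of a single responsible sender `ℓ`. -/
def IsTaskBased (R B : Matrix (Fin n) (Fin m) (ZMod 2))
    {h : Fin n → ℕ} (β : ∀ u : Fin n, Matrix (Fin (h u)) (Fin m) (ZMod 2)) : Prop :=
  IsBroadcastSolution R B β ∧
  ∀ u a, R u a = 1 → ∃ ℓ : Fin n, ∃ α : Fin (h ℓ) ⊕ Fin m → ZMod 2,
    e m a = α ᵥ* Matrix.fromRows (β ℓ) (Matrix.diagonal (B u))

/-- `(T)_{(R,B)}`: the minimum length of a task-based solution. -/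
noncomputable def Topt (R B : Matrix (Fin n) (Fin m) (ZMod 2)) : ℕ :=
  sInf {s | ∃ (h : Fin n → ℕ) (β : ∀ u : Fin n, Matrix (Fin (h u)) (Fin m) (ZMod 2)),
    IsTaskBased R B β ∧ ∑ u, h u = s}

/-- The edge relation of the problem graph: for distinct requirement pairs `(u,a)`, `(w,b)`,
there is an edge from `v_{(u,a)}` to `v_{(w,b)}` iff `B u b = 1` or `a = b`. -/
def probEdge (R B : Matrix (Fin n) (Fin m) (ZMod 2)) (v w : Vtx R) : Prop :=
  v ≠ w ∧ (B v.1.1 w.1.2 = 1 ∨ v.1.2 = w.1.2)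

/-- A matrix `A` fits a directed graph with edge relation `E`. -/
def Fits {V : Type} (E : V → V → Prop) (A : Matrix V V (ZMod 2)) : Prop :=
  (∀ k, A k k = 1) ∧ ∀ k l, k ≠ l → ¬ E k l → A k l = 0

/-- `minrk₂`: the minimum `F₂`-rank of a matrix fitting the graph. -/
noncomputable def minrk {V : Type} [Fintype V] (E : V → V → Prop) : ℕ :=
  sInf {r | ∃ A : Matrix V V (ZMod 2), Fits E A ∧ A.rank = r}

/-- `rminrk₂`: the minimum `F₂`-rank of a matrix in `𝒜` fitting the graph. -/
noncomputable def rminrk {V : Type} [Fintype V] (E : V → V → Prop)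
    (𝒜 : Set (Matrix V V (ZMod 2))) : ℕ :=
  sInf {r | ∃ A ∈ 𝒜, Fits E A ∧ A.rank = r}

/-- The column repetition function `φ_{(R,B)}`: the column of `φ(A)` indexed by
`v_{(u,a)}` is the `a`-th column of `A`. -/
def phi (R : Matrix (Fin n) (Fin m) (ZMod 2))
    (A : Matrix (Vtx R) (Fin m) (ZMod 2)) : Matrix (Vtx R) (Vtx R) (ZMod 2) :=
  Matrix.of fun k v => A k v.1.2

/-- The sender neighborhood `N_u = {v_{(w,b)} ∈ V : B u b = 1}`. -/
def senderNbhd (R B : Matrix (Fin n) (Fin m) (ZMod 2)) (u : Fin n) : Set (Vtx R) :=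
  {v | B u v.1.2 = 1}

/-- A neighborhood partition `{Ñ_1, …, Ñ_n}`. -/
def IsNbhdPartition (R B : Matrix (Fin n) (Fin m) (ZMod 2))
    (N : Fin n → Set (Vtx R)) : Prop :=
  (∀ i, N i ⊆ senderNbhd R B i) ∧
  (∀ i j, i ≠ j → Disjoint (N i) (N j)) ∧
  (⋃ i, N i) = Set.univ

open Classical in
/-- `R^(i)`: the request matrix of the EIC subproblem induced by `Ñ_i`; it has ones
exactly at the requirement pairs whose vertex lies in `Ñ_i`. -/
noncomputable def Rsub (R : Matrix (Fin n) (Fin m) (ZMod 2))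
    (N : Fin n → Set (Vtx R)) (i : Fin n) : Matrix (Fin n) (Fin m) (ZMod 2) :=
  Matrix.of fun u a =>
    if hr : R u a = 1 then (if (⟨(u, a), hr⟩ : Vtx R) ∈ N i then 1 else 0) else 0

open Classical in
/-- `B^(i)`: the has-matrix of the EIC subproblem induced by `Ñ_i`; it agrees with `B`
on the columns of blocks requested in `Ñ_i` and is zero elsewhere. -/
noncomputable def Bsub (R B : Matrix (Fin n) (Fin m) (ZMod 2))
    (N : Fin n → Set (Vtx R)) (i : Fin n) : Matrix (Fin n) (Fin m) (ZMod 2) :=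
  Matrix.of fun u a => if ∃ v ∈ N i, v.1.2 = a then B u a else 0

/-- `Cl` is a clique for the edge relation `E`. -/
def IsClique {V : Type} (E : V → V → Prop) (Cl : Set V) : Prop :=
  ∀ k ∈ Cl, ∀ l ∈ Cl, k ≠ l → E k l

/-- `I` is an independent set for the edge relation `E` (no edge in either direction). -/
def IsIndep {V : Type} (E : V → V → Prop) (I : Set V) : Prop :=
  ∀ k ∈ I, ∀ l ∈ I, k ≠ l → ¬ E k l ∧ ¬ E l k

/-- `χ(Ḡ|_S)`: the minimum number of cliques of the induced subgraph `G|_S`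
needed to partition `S`. -/
noncomputable def cliqueCoverNum {V : Type} (E : V → V → Prop) (S : Set V) : ℕ :=
  sInf {t | ∃ Cl : Fin t → Set V, (∀ i, Cl i ⊆ S) ∧ (∀ i, IsClique E (Cl i)) ∧
    (∀ i j, i ≠ j → Disjoint (Cl i) (Cl j)) ∧ (⋃ i, Cl i) = S}

/-- `χ(G)`: the minimum number of independent sets of `G` needed to partition
its vertex set. -/
noncomputable def chromNum {V : Type} [Fintype V] (E : V → V → Prop) : ℕ :=
  sInf {t | ∃ I : Fin t → Set V, (∀ i, IsIndep E (I i)) ∧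
    (∀ i j, i ≠ j → Disjoint (I i) (I j)) ∧ (⋃ i, I i) = Set.univ}

/-- `ω(Ḡ|_S)`: the maximum size of an independent set of the induced subgraph `G|_S`. -/
noncomputable def indepNum {V : Type} (E : V → V → Prop) (S : Set V) : ℕ :=
  sSup {t | ∃ I ⊆ S, IsIndep E I ∧ I.ncard = t}

/-- The set of neighborhood-cliques: vertex sets of maximal cliques of the induced
subgraphs `G|_{N_i}`, over all senders `i`. -/
def nbhdCliques (R B : Matrix (Fin n) (Fin m) (ZMod 2)) : Set (Set (Vtx R)) :=
  {Cl | ∃ i : Fin n, Cl ⊆ senderNbhd R B i ∧ IsClique (probEdge R B) Cl ∧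
    ∀ Cl', Cl ⊆ Cl' → Cl' ⊆ senderNbhd R B i → IsClique (probEdge R B) Cl' → Cl' = Cl}

/-!
The owner `ℓ` of the part containing `(u, a)` is responsible for `(u, a)`: in the `ℓ`-th subproblem
`u` decodes `a` from `β ℓ` and side information that is only smaller than its side information in
`(R, B)`. Each sender can transmit its part, because `Ñ_ℓ ⊆ N_ℓ` says that it has every block that
is requested there.
-/

section Decoding

variable {ι ι' κ K : Type*} [Fintype ι] [Fintype ι'] [Fintype κ] [DecidableEq κ]

/-- A receiver whose side information is the diagonal matrix with entries `s` can recover block `a`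
linearly from the broadcast `β`. This is the decoding condition common to `IsCentralizedSolution`,
`IsBroadcastSolution` and `IsTaskBased`, which unfold to it. -/
def CanDecode [Semiring K] (β : Matrix ι κ K) (s : κ → K) (a : κ) : Prop :=
  ∃ α : ι ⊕ κ → K, Pi.single a 1 = α ᵥ* Matrix.fromRows β (Matrix.diagonal s)

theorem canDecode_iff [Semiring K] {β : Matrix ι κ K} {s : κ → K} {a : κ} :
    CanDecode β s a ↔ ∃ (x : ι → K) (y : κ → K), Pi.single a 1 = x ᵥ* β + y * s := by
  have vecMul_diagonal_eq (y : κ → K) : y ᵥ* Matrix.diagonal s = y * s :=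
    funext (Matrix.vecMul_diagonal y s)
  constructor
  · rintro ⟨α, hα⟩
    exact ⟨α ∘ Sum.inl, α ∘ Sum.inr, by rw [hα, Matrix.vecMul_fromRows, vecMul_diagonal_eq]⟩
  · rintro ⟨x, y, hxy⟩
    exact ⟨Sum.elim x y, by
      rw [hxy, Matrix.vecMul_fromRows, Sum.elim_comp_inl, Sum.elim_comp_inr, vecMul_diagonal_eq]⟩

theorem CanDecode.of_dvd [CommSemiring K] {β : Matrix ι κ K} {s t : κ → K} {a : κ}
    (h : CanDecode β s a) (hts : t ∣ s) : CanDecode β t a := by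
  obtain ⟨x, y, hxy⟩ := canDecode_iff.mp h
  obtain ⟨c, rfl⟩ := hts
  exact canDecode_iff.mpr ⟨x, y * c, by rw [hxy, mul_assoc, mul_comm c t]⟩

theorem CanDecode.of_mul [Semiring K] {A : Matrix ι' ι K} {β : Matrix ι κ K} {s : κ → K} {a : κ}
    (h : CanDecode (A * β) s a) : CanDecode β s a := by
  obtain ⟨x, y, hxy⟩ := canDecode_iff.mp h
  exact canDecode_iff.mpr ⟨x ᵥ* A, y, by rw [hxy, Matrix.vecMul_vecMul]⟩

theorem CanDecode.of_submatrix [Semiring K] {β : Matrix ι κ K} {f : ι' → ι} {s : κ → K} {a : κ}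
    (h : CanDecode (β.submatrix f id) s a) : CanDecode β s a := by
  classical
  have select_rows : β.submatrix f id = (1 : Matrix ι ι K).submatrix f id * β :=
    (Matrix.one_submatrix_mul f (Equiv.refl ι) β).symm
  exact CanDecode.of_mul (select_rows ▸ h)

end Decoding

section Subproblem

variable {R B : Matrix (Fin n) (Fin m) (ZMod 2)} {N : Fin n → Set (Vtx R)}

theorem Rsub_eq_one_iff {i u : Fin n} {a : Fin m} :
    Rsub R N i u a = 1 ↔ ∃ hr : R u a = 1, (⟨(u, a), hr⟩ : Vtx R) ∈ N i := by
  rw [Rsub, Matrix.of_apply]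
  split_ifs with hr hmem
  · exact iff_of_true rfl ⟨hr, hmem⟩
  · exact iff_of_false zero_ne_one fun ⟨_, hmem'⟩ => hmem hmem'
  · exact iff_of_false zero_ne_one fun ⟨hr', _⟩ => hr hr'

theorem dvd_Bsub (i u : Fin n) : B u ∣ Bsub R B N i u := by
  refine pi_dvd_iff.mpr fun a => ?_
  rw [Bsub, Matrix.of_apply]
  split_ifs
  · exact dvd_rfl
  · exact dvd_zero _

theorem not_requested_of_subset_senderNbhd {S : Set (Vtx R)} {u : Fin n} {a : Fin m}
    (hS : S ⊆ senderNbhd R B u) (ha : B u a = 0) : ¬ ∃ v ∈ S, v.1.2 = a := by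
  rintro ⟨v, hv, rfl⟩
  exact zero_ne_one (ha.symm.trans (hS hv))

end Subproblem

section Responsibility

variable {R B : Matrix (Fin n) (Fin m) (ZMod 2)} {h : Fin n → ℕ}
  {β : ∀ w : Fin n, Matrix (Fin (h w)) (Fin m) (ZMod 2)}

theorem canDecode_vconcat {ℓ : Fin n} {s : Fin m → ZMod 2} {a : Fin m}
    (hℓ : CanDecode (β ℓ) s a) : CanDecode (vconcat β) s a :=
  CanDecode.of_submatrix (f := Sigma.mk ℓ) hℓ

theorem isTaskBased_of_responsible (hsend : ∀ w a, B w a = 0 → ∀ i, β w i a = 0)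
    (hresp : ∀ u a, R u a = 1 → ∃ ℓ, CanDecode (β ℓ) (B u) a) : IsTaskBased R B β := by
  refine ⟨⟨hsend, fun u a hr => ?_⟩, hresp⟩
  obtain ⟨ℓ, hℓ⟩ := hresp u a hr
  exact canDecode_vconcat hℓ

end Responsibility

theorem subproblem_solutions_task_based_general
    {R B : Matrix (Fin n) (Fin m) (ZMod 2)} {N : Fin n → Set (Vtx R)}
    (hcover : (⋃ i, N i) = Set.univ)
    {h : Fin n → ℕ} {β : ∀ w : Fin n, Matrix (Fin (h w)) (Fin m) (ZMod 2)}
    (hsol : ∀ w, IsCentralizedSolution (Rsub R N w) (Bsub R B N w) (β w))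
    (hsend : ∀ w a, B w a = 0 → ∀ i, β w i a = 0) :
    IsTaskBased R B β := by
  refine isTaskBased_of_responsible hsend fun u a hr => ?_
  obtain ⟨ℓ, hℓ⟩ : ∃ ℓ, (⟨(u, a), hr⟩ : Vtx R) ∈ N ℓ := Set.iUnion_eq_univ_iff.mp hcover _
  have decode_sub : CanDecode (β ℓ) (Bsub R B N ℓ u) a :=
    hsol ℓ u a (Rsub_eq_one_iff.mpr ⟨hr, hℓ⟩)
  exact ⟨ℓ, decode_sub.of_dvd (dvd_Bsub ℓ u)⟩

theorem subproblem_solutions_task_based {n m : ℕ}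
    (R B : Matrix (Fin n) (Fin m) (ZMod 2)) (hdisj : DisjointSupports R B)
    (N : Fin n → Set (Vtx R)) (hpart : IsNbhdPartition R B N)
    (h : Fin n → ℕ) (β : ∀ w : Fin n, Matrix (Fin (h w)) (Fin m) (ZMod 2))
    (hsol : ∀ w, IsCentralizedSolution (Rsub R N w) (Bsub R B N w) (β w))
    (hcols : ∀ w a, (¬ ∃ v ∈ N w, v.1.2 = a) → ∀ i, β w i a = 0) :
    IsTaskBased R B β :=
  subproblem_solutions_task_based_general hpart.2.2 hsol fun w a ha =>
    hcols w a (not_requested_of_subset_senderNbhd (hpart.1 w) ha)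

end EIC
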